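/- arXiv:2512.22696 — 2 statements merged into one kernel-verified Lean document; each statement's English description precedes it below -/
import Mathlib

section
/- Let a, b, c be positive integers with gcd(a,b) = 1 and c² = a² + b² + ab, and let x be an integer with x > ab − a − b. Then the parallelogram with angles π/3 and 2π/3 and side lengths ab and x (the convex hull of (0,0), (x,0), (x + ab/2, ab·√3/2), (ab/2, ab·√3/2)) tiles into 2x congruent copies of the triangle with side lengths (a, b, c). -/
noncomputable section

abbrev Plane := EuclideanSpace ℝ (Fin 2)

/-- The point (x, y) in the Euclidean plane. -/
def pt (x y : ℝ) : Plane := (WithLp.equiv 2 (Fin 2 → ℝ)).symm ![x, y]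

/-- `Δ` is a triangle with side lengths `(p, q, r)`: the convex hull of points `P, Q, R`
with `dist Q R = p`, `dist P R = q`, `dist P Q = r`. -/
def IsTriangle (p q r : ℝ) (Δ : Set Plane) : Prop :=
  ∃ P Q R : Plane, dist Q R = p ∧ dist P R = q ∧ dist P Q = r ∧
    Δ = convexHull ℝ {P, Q, R}

/-- `S` tiles into `N` congruent copies of the `(p, q, r)` triangle: there are isometries
`f 1, …, f N` of the plane and a triangle `Δ` with side lengths `(p, q, r)` such that
`S` is the union of the `f i '' Δ` and their interiors are pairwise disjoint. -/
def TilesInto (S : Set Plane) (N : ℕ) (p q r : ℝ) : Prop :=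
  ∃ (f : Fin N → Plane ≃ᵢ Plane) (Δ : Set Plane),
    IsTriangle p q r Δ ∧
    S = ⋃ i, f i '' Δ ∧
    ∀ i j : Fin N, i ≠ j → interior (f i '' Δ) ∩ interior (f j '' Δ) = ∅

/-- The parallelogram with angles `π/3` and `2π/3`, side lengths `s` and `x`. -/
def Parallelogram60 (s x : ℝ) : Set Plane :=
  convexHull ℝ {pt 0 0, pt x 0, pt (x + s/2) (s * Real.sqrt 3 / 2),
    pt (s/2) (s * Real.sqrt 3 / 2)}

def UU (p : Plane) : ℝ := p 0 - p 1 / Real.sqrt 3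
def VV (p : Plane) : ℝ := 2 * p 1 / Real.sqrt 3
def ee (u v : ℝ) : Plane := pt (u + v / 2) (v * Real.sqrt 3 / 2)

lemma pt_zero (x y : ℝ) : pt x y 0 = x := by simp [pt]
lemma pt_one (x y : ℝ) : pt x y 1 = y := by simp [pt]

lemma UU_ee (u v : ℝ) : UU (ee u v) = u := by
  have : Real.sqrt 3 ≠ 0 := by positivity
  simp only [UU, ee, pt_zero, pt_one]; field_simp; ring
lemma VV_ee (u v : ℝ) : VV (ee u v) = v := by
  have : Real.sqrt 3 ≠ 0 := by positivity
  simp only [VV, ee, pt_zero, pt_one]; field_simp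
lemma ee_UV (p : Plane) : ee (UU p) (VV p) = p := by
  have : Real.sqrt 3 ≠ 0 := by positivity
  ext i
  fin_cases i
  · simp only [UU, VV, ee, Fin.zero_eta, pt_zero]; field_simp; ring
  · simp only [UU, VV, ee, Fin.mk_one, pt_one]; field_simp
lemma UU_add (p q : Plane) : UU (p + q) = UU p + UU q := by
  simp only [UU, PiLp.add_apply]; ring
lemma VV_add (p q : Plane) : VV (p + q) = VV p + VV q := by
  simp only [VV, PiLp.add_apply]; ring
lemma UU_sub (p q : Plane) : UU (p - q) = UU p - UU q := by
  simp only [UU, PiLp.sub_apply]; ring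
lemma VV_sub (p q : Plane) : VV (p - q) = VV p - VV q := by
  simp only [VV, PiLp.sub_apply]; ring
lemma UU_smul (t : ℝ) (q : Plane) : UU (t • q) = t * UU q := by
  simp only [UU, PiLp.smul_apply, smul_eq_mul]; ring
lemma VV_smul (t : ℝ) (q : Plane) : VV (t • q) = t * VV q := by
  simp only [VV, PiLp.smul_apply, smul_eq_mul]; ring
lemma UV_ext {p q : Plane} (h1 : UU p = UU q) (h2 : VV p = VV q) : p = q := by
  rw [← ee_UV p, ← ee_UV q, h1, h2]

lemma dist_UV (p q : Plane) : dist p q = Real.sqrt ((UU p - UU q) ^ 2 + (VV p - VV q) ^ 2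
    + (UU p - UU q) * (VV p - VV q)) := by
  have h3 : Real.sqrt 3 ≠ 0 := by positivity
  have h4 : Real.sqrt 3 ^ 2 = 3 := Real.sq_sqrt (by norm_num)
  rw [EuclideanSpace.dist_eq]
  congr 1
  simp only [Fin.sum_univ_two, Real.dist_eq, sq_abs, UU, VV]
  field_simp
  ring_nf
  rw [h4]; ring

/-- swap of the oblique coordinates -/
def swapI : Plane ≃ᵢ Plane where
  toFun p := ee (VV p) (UU p)
  invFun p := ee (VV p) (UU p)
  left_inv p := by simp only [UU_ee, VV_ee, ee_UV]
  right_inv p := by simp only [UU_ee, VV_ee, ee_UV]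
  isometry_toFun := by
    refine Isometry.of_dist_eq fun p q => ?_
    rw [dist_UV, dist_UV]
    simp only [UU_ee, VV_ee]
    congr 1; ring

def HasT (Δ S : Set Plane) (N : ℕ) : Prop :=
  ∃ f : Fin N → Plane ≃ᵢ Plane, S = ⋃ i, f i '' Δ ∧
    ∀ i j : Fin N, i ≠ j → interior (f i '' Δ) ∩ interior (f j '' Δ) = ∅

lemma HasT.union {Δ S T : Set Plane} {N M : ℕ} (hS : HasT Δ S N) (hT : HasT Δ T M)
    (hd : interior S ∩ interior T = ∅) : HasT Δ (S ∪ T) (N + M) := by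
  obtain ⟨f, hf, hf'⟩ := hS
  obtain ⟨g, hg, hg'⟩ := hT
  have key : ∀ i j, interior (f i '' Δ) ∩ interior (g j '' Δ) = ∅ := by
    intro i j
    apply Set.subset_empty_iff.1
    rw [← hd]
    apply Set.inter_subset_inter
    · apply interior_mono; rw [hf]; exact Set.subset_iUnion (fun i => f i '' Δ) i
    · apply interior_mono; rw [hg]; exact Set.subset_iUnion (fun i => g i '' Δ) j
  refine ⟨Fin.append f g, ?_, ?_⟩
  · ext p
    simp only [Set.mem_union, Set.mem_iUnion, hf, hg]
    constructor
    · rintro (⟨i, hi⟩ | ⟨i, hi⟩)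
      · exact ⟨Fin.castAdd M i, by rwa [Fin.append_left]⟩
      · exact ⟨Fin.natAdd N i, by rwa [Fin.append_right]⟩
    · rintro ⟨i, hi⟩
      induction i using Fin.addCases with
      | left i => rw [Fin.append_left] at hi; exact Or.inl ⟨i, hi⟩
      | right i => rw [Fin.append_right] at hi; exact Or.inr ⟨i, hi⟩
  · intro i j hij
    induction i using Fin.addCases with
    | left i =>
      induction j using Fin.addCases with
      | left j =>
        simp only [Fin.append_left]; exact hf' i j (fun h => hij (by rw [h]))
      | right j => simp only [Fin.append_left, Fin.append_right]; exact key i j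
    | right i =>
      induction j using Fin.addCases with
      | left j =>
        simp only [Fin.append_left, Fin.append_right]; rw [Set.inter_comm]; exact key j i
      | right j =>
        simp only [Fin.append_right]; exact hg' i j (fun h => hij (by rw [h]))

lemma HasT.image {Δ S : Set Plane} {N : ℕ} (hS : HasT Δ S N) (g : Plane ≃ᵢ Plane) :
    HasT Δ (g '' S) N := by
  obtain ⟨f, hf, hf'⟩ := hS
  have e : ∀ i, ((f i).trans g) '' Δ = g '' (f i '' Δ) := by
    intro i; rw [← Set.image_comp]; rfl
  refine ⟨fun i => (f i).trans g, ?_, ?_⟩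
  · simp only [e]
    rw [← Set.image_iUnion, hf]
  · intro i j hij
    simp only [e]
    have := hf' i j hij
    have hi : ∀ X : Set Plane, interior (g '' X) = g '' interior X :=
      fun X => (g.toHomeomorph.image_interior X).symm
    rw [hi, hi, ← Set.image_inter g.injective, this, Set.image_empty]

lemma HasT.single (Δ : Set Plane) : HasT Δ Δ 1 := by
  refine ⟨fun _ => IsometryEquiv.refl _, ?_, ?_⟩
  · rw [Set.iUnion_const]; exact (Set.image_id Δ).symm
  intro i j hij; exact absurd (Subsingleton.elim i j) hij

lemma int_disj {S T : Set Plane} (α β γ : ℝ) (h0 : α ≠ 0 ∨ β ≠ 0)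
    (hS : ∀ p ∈ S, α * UU p + β * VV p ≤ γ) (hT : ∀ p ∈ T, γ ≤ α * UU p + β * VV p) :
    interior S ∩ interior T = ∅ := by
  rw [← interior_inter]
  apply Set.eq_empty_iff_forall_notMem.2
  intro p hp
  have hn : S ∩ T ∈ nhds p := mem_interior_iff_mem_nhds.1 hp
  have hc : Continuous (fun t : ℝ => p + t • ee α β) := by fun_prop
  have h1 : ∀ᶠ t in nhds (0:ℝ), p + t • ee α β ∈ S ∩ T := by
    apply hc.continuousAt.eventually
    simpa using hn
  have hp' := interior_subset hp
  have hpe := le_antisymm (hS p hp'.1) (hT p hp'.2)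
  obtain ⟨ε, hε, h2⟩ := Metric.eventually_nhds_iff.1 h1
  have h3 := h2 (y := ε / 2) (by simp [abs_of_pos hε]; linarith)
  have h4 := hS _ h3.1
  simp only [UU_add, VV_add, UU_smul, VV_smul, UU_ee, VV_ee] at h4
  have : 0 < α ^ 2 + β ^ 2 := by rcases h0 with h | h <;> positivity
  nlinarith [mul_pos hε this]

def RR (u u' v v' : ℝ) : Set Plane := {p | u ≤ UU p ∧ UU p ≤ u' ∧ v ≤ VV p ∧ VV p ≤ v'}

lemma RR_union_h {u u' u'' v v' : ℝ} (h : u ≤ u') (h' : u' ≤ u'') :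
    RR u u' v v' ∪ RR u' u'' v v' = RR u u'' v v' := by
  ext p
  simp only [RR, Set.mem_union, Set.mem_ofPred_eq]
  constructor
  · rintro (⟨h1, h2, h3, h4⟩ | ⟨h1, h2, h3, h4⟩) <;> refine ⟨?_, ?_, ?_, ?_⟩ <;> linarith
  · rintro ⟨h1, h2, h3, h4⟩
    rcases le_total (UU p) u' with h5 | h5
    · exact Or.inl ⟨h1, h5, h3, h4⟩
    · exact Or.inr ⟨h5, h2, h3, h4⟩

lemma RR_union_v {u u' v v' v'' : ℝ} (h : v ≤ v') (h' : v' ≤ v'') :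
    RR u u' v v' ∪ RR u u' v' v'' = RR u u' v v'' := by
  ext p
  simp only [RR, Set.mem_union, Set.mem_ofPred_eq]
  constructor
  · rintro (⟨h1, h2, h3, h4⟩ | ⟨h1, h2, h3, h4⟩) <;> refine ⟨?_, ?_, ?_, ?_⟩ <;> linarith
  · rintro ⟨h1, h2, h3, h4⟩
    rcases le_total (VV p) v' with h5 | h5
    · exact Or.inl ⟨h1, h2, h3, h5⟩
    · exact Or.inr ⟨h1, h2, h5, h4⟩

lemma mem_image_iso (g : Plane ≃ᵢ Plane) (S : Set Plane) (p : Plane) :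
    p ∈ g '' S ↔ g.symm p ∈ S := by
  constructor
  · rintro ⟨q, hq, rfl⟩; simpa using hq
  · intro h; exact ⟨_, h, by simp⟩

lemma RR_translate (Δ : Set Plane) (w h : ℝ) (N : ℕ) (H : HasT Δ (RR 0 w 0 h) N) (u v : ℝ) :
    HasT Δ (RR u (u + w) v (v + h)) N := by
  have := H.image (IsometryEquiv.addRight (ee u v))
  convert this using 1
  ext p
  rw [mem_image_iso]
  simp only [IsometryEquiv.addRight_symm, IsometryEquiv.addRight_apply, ← sub_eq_add_neg, RR,
    Set.mem_ofPred_eq, UU_sub, VV_sub, UU_ee, VV_ee]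
  constructor <;> rintro ⟨h1, h2, h3, h4⟩ <;> refine ⟨?_, ?_, ?_, ?_⟩ <;> linarith

lemma RR_swap (Δ : Set Plane) (w h : ℝ) (N : ℕ) (H : HasT Δ (RR 0 w 0 h) N) :
    HasT Δ (RR 0 h 0 w) N := by
  have := H.image swapI
  convert this using 1
  ext p
  rw [mem_image_iso]
  have : swapI.symm p = ee (VV p) (UU p) := rfl
  rw [this]
  simp only [RR, Set.mem_ofPred_eq, UU_ee, VV_ee]
  tauto

def LL (a b : ℝ) : Set Plane := {p | 0 ≤ VV p ∧ UU p ≤ a ∧ a * VV p ≤ b * UU p}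

lemma cell (a b : ℝ) (ha : 0 < a) (hb : 0 < b) : HasT (LL a b) (RR 0 a 0 b) 2 := by
  have h1 := HasT.single (LL a b)
  have h2 := h1.image (IsometryEquiv.subLeft (ee a b))
  have e : IsometryEquiv.subLeft (ee a b) '' LL a b
      = {p | VV p ≤ b ∧ 0 ≤ UU p ∧ b * UU p ≤ a * VV p} := by
    ext p
    have : p ∈ IsometryEquiv.subLeft (ee a b) '' LL a b ↔ ee a b - p ∈ LL a b := by
      constructor
      · rintro ⟨q, hq, rfl⟩; simpa using hq
      · intro h; exact ⟨_, h, by simp⟩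
    rw [this]
    simp only [LL, Set.mem_ofPred_eq, UU_sub, VV_sub, UU_ee, VV_ee]
    constructor <;> rintro ⟨h1, h2, h3⟩ <;> refine ⟨?_, ?_, ?_⟩ <;> linarith
  rw [e] at h2
  have h3 := h1.union h2 (by
    rw [Set.inter_comm]
    refine int_disj b (-a) 0 (Or.inl hb.ne') ?_ ?_
    · rintro p ⟨h1, h2, h3⟩; linarith
    · rintro p ⟨h1, h2, h3⟩; linarith)
  convert h3 using 1
  ext p
  simp only [RR, LL, Set.mem_union, Set.mem_ofPred_eq]
  constructor
  · rintro ⟨h1, h2, h3, h4⟩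
    rcases le_total (a * VV p) (b * UU p) with h5 | h5
    · exact Or.inl ⟨h3, h2, h5⟩
    · exact Or.inr ⟨h4, h1, h5⟩
  · rintro (⟨h1, h2, h3⟩ | ⟨h1, h2, h3⟩)
    · refine ⟨?_, h2, h1, ?_⟩
      · have := mul_nonneg ha.le h1
        exact nonneg_of_mul_nonneg_right (by linarith : 0 ≤ b * UU p) hb
      · have := mul_le_mul_of_nonneg_left h2 hb.le
        exact le_of_mul_le_mul_left (by linarith : a * VV p ≤ a * b) ha
    · refine ⟨h2, ?_, ?_, h1⟩
      · have := mul_le_mul_of_nonneg_left h1 ha.le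
        exact le_of_mul_le_mul_left (by linarith : b * UU p ≤ b * a) hb
      · have := mul_nonneg hb.le h2
        exact nonneg_of_mul_nonneg_right (by linarith : 0 ≤ a * VV p) ha

lemma glue_h {Δ : Set Plane} {w w' h : ℝ} {N M : ℕ} (hw : 0 ≤ w) (hw' : 0 ≤ w')
    (H : HasT Δ (RR 0 w 0 h) N) (H' : HasT Δ (RR 0 w' 0 h) M) :
    HasT Δ (RR 0 (w + w') 0 h) (N + M) := by
  have h2 := RR_translate Δ _ _ _ H' w 0
  rw [zero_add] at h2
  rw [← RR_union_h hw (by linarith : w ≤ w + w')]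
  refine H.union h2 (int_disj 1 0 w (Or.inl one_ne_zero) ?_ ?_)
  · rintro p ⟨h1, h2, h3⟩; linarith
  · rintro p ⟨h1, h2, h3⟩; linarith

lemma glue_mul {Δ : Set Plane} {w h : ℝ} {N : ℕ} (hw : 0 ≤ w)
    (H : HasT Δ (RR 0 w 0 h) N) (k : ℕ) :
    HasT Δ (RR 0 ((k + 1 : ℕ) * w) 0 h) ((k + 1) * N) := by
  induction k with
  | zero => simpa using H
  | succ k ih =>
    have := glue_h (by positivity) hw ih H
    convert this using 1
    · congr 1; push_cast; ring
    · ring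

lemma para_eq (s x : ℝ) (hs : 0 < s) (hx : 0 < x) : Parallelogram60 s x = RR 0 x 0 s := by
  have e1 : pt 0 0 = ee 0 0 := by simp [ee]
  have e2 : pt x 0 = ee x 0 := by simp [ee]
  have e3 : pt (x + s/2) (s * Real.sqrt 3 / 2) = ee x s := rfl
  have e4 : pt (s/2) (s * Real.sqrt 3 / 2) = ee 0 s := by simp [ee]
  rw [Parallelogram60, e1, e2, e3, e4]
  apply Set.Subset.antisymm
  · apply convexHull_min
    · rintro p (rfl | rfl | rfl | rfl) <;> simp [RR, UU_ee, VV_ee, hs.le, hx.le]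
    · rintro p ⟨h1, h2, h3, h4⟩ q ⟨k1, k2, k3, k4⟩ α β hα hβ hαβ
      simp only [RR, Set.mem_ofPred_eq, UU_add, VV_add, UU_smul, VV_smul]
      obtain rfl : β = 1 - α := by linarith
      refine ⟨by positivity, ?_, by positivity, ?_⟩ <;> nlinarith
  · rintro p ⟨h1, h2, h3, h4⟩
    set C := convexHull ℝ {ee 0 0, ee x 0, ee x s, ee 0 s} with hC
    have hconv : Convex ℝ C := convex_convexHull _ _
    have m1 : ee 0 0 ∈ C := subset_convexHull _ _ (by simp)
    have m2 : ee x 0 ∈ C := subset_convexHull _ _ (by simp)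
    have m3 : ee x s ∈ C := subset_convexHull _ _ (by simp)
    have m4 : ee 0 s ∈ C := subset_convexHull _ _ (by simp)
    have t0 : 0 ≤ UU p / x := by positivity
    have t1 : 0 ≤ 1 - UU p / x := by rw [sub_nonneg, div_le_one hx]; exact h2
    have r0 : 0 ≤ VV p / s := by positivity
    have r1 : 0 ≤ 1 - VV p / s := by rw [sub_nonneg, div_le_one hs]; exact h4
    have n1 := hconv m1 m2 t1 t0 (by ring)
    have n2 := hconv m4 m3 t1 t0 (by ring)
    have n3 := hconv n1 n2 r1 r0 (by ring)
    convert n3 using 1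
    apply UV_ext <;> simp only [UU_add, VV_add, UU_smul, VV_smul, UU_ee, VV_ee] <;>
      field_simp <;> ring

lemma LL_eq (a b : ℝ) (ha : 0 < a) (hb : 0 < b) :
    LL a b = convexHull ℝ {ee a b, ee 0 0, ee a 0} := by
  apply Set.Subset.antisymm
  · rintro p ⟨h1, h2, h3⟩
    set C := convexHull ℝ {ee a b, ee 0 0, ee a 0} with hC
    have hconv : Convex ℝ C := convex_convexHull _ _
    have m1 : ee a b ∈ C := subset_convexHull _ _ (by simp)
    have m2 : ee 0 0 ∈ C := subset_convexHull _ _ (by simp)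
    have m3 : ee a 0 ∈ C := subset_convexHull _ _ (by simp)
    have hsum := hconv.sum_mem (t := Finset.univ) (w := ![VV p / b, 1 - UU p / a, UU p / a - VV p / b])
      (z := ![ee a b, ee 0 0, ee a 0]) (by
        intro i _
        fin_cases i
        · simp; positivity
        · simp; rw [div_le_one ha]; exact h2
        · simp; rw [div_le_div_iff₀ hb ha]; linarith) (by
        simp [Fin.sum_univ_three]; ring) (by
        intro i _
        fin_cases i
        · exact m1
        · exact m2
        · exact m3)
    convert hsum using 1
    simp only [Fin.sum_univ_three, Matrix.cons_val_zero, Matrix.cons_val_one, Matrix.cons_val]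
    apply UV_ext <;> simp only [UU_add, VV_add, UU_smul, VV_smul, UU_ee, VV_ee] <;>
      field_simp <;> ring
  · apply convexHull_min
    · rintro p (rfl | rfl | rfl) <;> simp [LL, UU_ee, VV_ee, hb.le, ha.le, mul_comm]
      positivity
    · rintro p ⟨h1, h2, h3⟩ q ⟨k1, k2, k3⟩ α β hα hβ hαβ
      simp only [LL, Set.mem_ofPred_eq, UU_add, VV_add, UU_smul, VV_smul]
      obtain rfl : β = 1 - α := by linarith
      refine ⟨by positivity, by nlinarith, ?_⟩
      linarith [mul_le_mul_of_nonneg_left h3 hα, mul_le_mul_of_nonneg_left k3 hβ]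

theorem stmt1 (a b c : ℕ) (ha : 0 < a) (hb : 0 < b) (hc : 0 < c)
    (hab : Nat.Coprime a b) (h : c ^ 2 = a ^ 2 + b ^ 2 + a * b)
    (x : ℤ) (hx : (a : ℤ) * b - a - b < x) :
    TilesInto (Parallelogram60 ((a : ℝ) * b) (x : ℝ)) (2 * x).toNat a b c := by
  have ha1 : a ≠ 1 := by
    rintro rfl
    have h1 : b < c := by nlinarith
    have h2 : c < b + 1 := by nlinarith
    omega
  have hb1 : b ≠ 1 := by
    rintro rfl
    have h1 : a < c := by nlinarith
    have h2 : c < a + 1 := by nlinarith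
    omega
  have ha2 : 2 ≤ a := by omega
  have hb2 : 2 ≤ b := by omega
  have hx0 : 0 < x := by
    have : (2:ℤ) ≤ a := by exact_mod_cast ha2
    have : (2:ℤ) ≤ b := by exact_mod_cast hb2
    nlinarith
  obtain ⟨n, rfl⟩ := Int.eq_ofNat_of_zero_le hx0.le
  have hn0 : 0 < n := by exact_mod_cast hx0
  have haR : (0:ℝ) < a := by exact_mod_cast ha
  have hbR : (0:ℝ) < b := by exact_mod_cast hb
  have hnR : (0:ℝ) < n := by exact_mod_cast hn0
  have hN : (2 * (n : ℤ)).toNat = 2 * n := by omega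
  rw [hN]
  obtain ⟨k, l, hkl⟩ : ∃ k l, k * a + l * b = n := by
    refine Nat.exists_add_mul_eq_of_gcd_dvd_of_mul_pred_le a b n (by rw [hab.gcd_eq_one]; simp) ?_
    rw [Nat.pred_eq_sub_one, Nat.pred_eq_sub_one]
    zify
    push_cast [Nat.cast_pred ha, Nat.cast_pred hb]
    nlinarith
  have c1 := cell a b haR hbR
  have A : HasT (LL a b) (RR 0 a 0 (a * b)) (2 * a) := by
    have := glue_mul hbR.le (RR_swap _ _ _ _ c1) (a - 1)
    rw [Nat.sub_add_cancel ha] at this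
    rw [mul_comm 2]
    exact RR_swap _ _ _ _ this
  have B : HasT (LL a b) (RR 0 b 0 (a * b)) (2 * b) := by
    have := glue_mul haR.le c1 (b - 1)
    rw [Nat.sub_add_cancel hb] at this
    rw [mul_comm 2, mul_comm (a:ℝ)]
    exact RR_swap _ _ _ _ this
  have main : HasT (LL a b) (RR 0 n 0 (a * b)) (2 * n) := by
    have hA : ∀ k : ℕ, HasT (LL a b) (RR 0 ((k + 1 : ℕ) * a) 0 (a * b)) ((k + 1) * (2 * a)) :=
      glue_mul haR.le A
    have hB : ∀ k : ℕ, HasT (LL a b) (RR 0 ((k + 1 : ℕ) * b) 0 (a * b)) ((k + 1) * (2 * b)) :=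
      glue_mul hbR.le B
    rcases k with _ | k
    · rcases l with _ | l
      · omega
      · convert hB l using 1
        · rw [← hkl]; push_cast; congr 1; ring
        · rw [← hkl]; ring
    · rcases l with _ | l
      · convert hA k using 1
        · rw [← hkl]; push_cast; congr 1; ring
        · rw [← hkl]; ring
      · convert glue_h (by positivity) (by positivity) (hA k) (hB l) using 1
        · rw [← hkl]; push_cast; congr 1
        · rw [← hkl]; ring
  obtain ⟨f, hf, hf'⟩ := main
  refine ⟨f, LL a b, ⟨ee a b, ee 0 0, ee a 0, ?_, ?_, ?_, LL_eq _ _ haR hbR⟩, ?_, hf'⟩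
  · rw [dist_UV]; simp [UU_ee, VV_ee]
  · rw [dist_UV]; simp [UU_ee, VV_ee]
  · rw [dist_UV]
    simp only [UU_ee, VV_ee, sub_zero]
    have : (a:ℝ) ^ 2 + b ^ 2 + a * b = c ^ 2 := by exact_mod_cast h.symm
    rw [this, Real.sqrt_sq (by positivity)]
  · rw [← hf, Int.cast_natCast, para_eq _ _ (by positivity) hnR]
end
end

section
/- Let a, b, c be positive integers with c² = a² + b² − ab. Then the ideal trapezoid with shorter parallel side c² and lateral sides ab (so with longer parallel side c² + ab = a² + b²) tiles into a² + b² + c² congruent copies of the triangle with side lengths (a, b, c). -/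
noncomputable section

/-- The ideal trapezoid with shorter parallel side `x` and lateral sides `ℓ`
(longer parallel side `x + ℓ`, base angles `π/3`). -/
def IdealTrapezoid (x ℓ : ℝ) : Set Plane :=
  convexHull ℝ {pt 0 0, pt (x + ℓ) 0, pt (x + ℓ/2) (ℓ * Real.sqrt 3 / 2),
    pt (ℓ/2) (ℓ * Real.sqrt 3 / 2)}

def qq (x y : ℝ) : Plane := pt (x + y / 2) (y * Real.sqrt 3 / 2)
def oX (p : Plane) : ℝ := p 0 - p 1 / Real.sqrt 3
def oY (p : Plane) : ℝ := 2 * p 1 / Real.sqrt 3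

lemma sq3 : Real.sqrt 3 * Real.sqrt 3 = 3 := Real.mul_self_sqrt (by norm_num)
lemma s3pos : 0 < Real.sqrt 3 := Real.sqrt_pos.mpr (by norm_num)

@[simp] lemma oX_qq (x y : ℝ) : oX (qq x y) = x := by
  have := s3pos
  simp [oX, qq, pt]
  field_simp
  ring
@[simp] lemma oY_qq (x y : ℝ) : oY (qq x y) = y := by
  have := s3pos
  simp [oY, qq, pt]
  field_simp
@[simp] lemma qq_o (p : Plane) : qq (oX p) (oY p) = p := by
  have := s3pos
  ext i
  fin_cases i
  · simp [oY, oX, qq, pt]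
    field_simp
    ring
  · simp [oY, oX, qq, pt]

lemma qq_dist (x y x' y' : ℝ) : dist (qq x y) (qq x' y') =
    Real.sqrt ((x - x') ^ 2 + (x - x') * (y - y') + (y - y') ^ 2) := by
  rw [EuclideanSpace.dist_eq]
  congr 1
  simp [qq, pt, Real.dist_eq, sq_abs]
  linear_combination ((y - y') ^ 2 / 4) * sq3

lemma qq_comb (r t x y x' y' : ℝ) :
    r • qq x y + t • qq x' y' = qq (r * x + t * x') (r * y + t * y') := by
  ext i
  fin_cases i <;> simp [qq, pt] <;> ring

lemma qq_cont : Continuous (fun z : ℝ × ℝ => qq z.1 z.2) := by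
  rw [continuous_iff_continuousAt]
  intro z
  have h : LipschitzWith 2 (fun z : ℝ × ℝ => qq z.1 z.2) := by
    refine LipschitzWith.of_dist_le_mul ?_
    intro z w
    rw [qq_dist, Prod.dist_eq]
    have h1 : |z.1 - w.1| ≤ max (dist z.1 w.1) (dist z.2 w.2) := le_max_left _ _
    have h2 : |z.2 - w.2| ≤ max (dist z.1 w.1) (dist z.2 w.2) := le_max_right _ _
    set m := max (dist z.1 w.1) (dist z.2 w.2)
    have hm : 0 ≤ m := (abs_nonneg _).trans h1
    apply Real.sqrt_le_iff.mpr
    refine ⟨by simpa using hm, ?_⟩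
    have e1 : (z.1 - w.1) ^ 2 ≤ m ^ 2 := sq_le_sq' (by linarith [(abs_le.mp h1).1]) (abs_le.mp h1).2
    have e2 : (z.2 - w.2) ^ 2 ≤ m ^ 2 := sq_le_sq' (by linarith [(abs_le.mp h2).1]) (abs_le.mp h2).2
    push_cast
    nlinarith [sq_nonneg ((z.1 - w.1) - (z.2 - w.2))]
  exact h.continuous.continuousAt

lemma sep (A B : Set Plane) (α β γ : ℝ) (h0 : 0 < α ^ 2 + β ^ 2)
    (hA : ∀ x y, qq x y ∈ A → α * x + β * y ≤ γ)
    (hB : ∀ x y, qq x y ∈ B → γ ≤ α * x + β * y) :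
    interior A ∩ interior B = ∅ := by
  rw [Set.eq_empty_iff_forall_notMem]
  rintro p ⟨hpA, hpB⟩
  have hb := hB (oX p) (oY p) (by simpa using interior_subset hpB)
  have hc : Continuous (fun e : ℝ => qq (oX p + e * α) (oY p + e * β)) :=
    qq_cont.comp (by fun_prop : Continuous (fun e : ℝ => (oX p + e * α, oY p + e * β)))
  have hn : ∀ᶠ e in nhds (0 : ℝ), qq (oX p + e * α) (oY p + e * β) ∈ interior A :=
    hc.continuousAt.eventually_mem (isOpen_interior.mem_nhds (by simpa using hpA))
  obtain ⟨d, hd, hball⟩ := Metric.eventually_nhds_iff.mp hn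
  have h1 := hA _ _ (interior_subset (hball (y := d / 2) (by
    rw [Real.dist_eq, sub_zero, abs_of_pos (by linarith)]; linarith)))
  nlinarith [mul_pos hd h0]

/-- isometry given by a matrix in oblique coordinates -/
lemma exists_iso (m n k l w z : ℝ) (d : ℝ) (hd : m * l - n * k = d) (hd2 : d * d = 1)
    (h1 : m ^ 2 + m * k + k ^ 2 = 1) (h2 : n ^ 2 + n * l + l ^ 2 = 1)
    (h3 : 2 * m * n + m * l + n * k + 2 * k * l = 1) :
    ∃ F : Plane ≃ᵢ Plane, ∀ x y, F (qq x y) = qq (m * x + n * y + w) (k * x + l * y + z) := by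
  refine ⟨IsometryEquiv.mk' (fun p => qq (m * oX p + n * oY p + w) (k * oX p + l * oY p + z))
    (fun p => qq (d * (l * (oX p - w) - n * (oY p - z))) (d * (-k * (oX p - w) + m * (oY p - z))))
    ?_ ?_, ?_⟩
  · intro p
    conv_rhs => rw [← qq_o p]
    simp only [oX_qq, oY_qq]
    congr 1
    · linear_combination (d * (oX p - w)) * hd + (oX p - w) * hd2
    · linear_combination (d * (oY p - z)) * hd + (oY p - z) * hd2
  · refine Isometry.of_dist_eq ?_
    intro p r
    conv_rhs => rw [← qq_o p, ← qq_o r]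
    rw [qq_dist, qq_dist]
    congr 1
    linear_combination (oX p - oX r) ^ 2 * h1 + (oY p - oY r) ^ 2 * h2
      + (oX p - oX r) * (oY p - oY r) * h3
  · intro x y
    simp [IsometryEquiv.mk']

def TI (ι : Type) (S Δ : Set Plane) : Prop :=
  ∃ f : ι → Plane ≃ᵢ Plane, S = ⋃ i, f i '' Δ ∧
    ∀ i j, i ≠ j → interior (f i '' Δ) ∩ interior (f j '' Δ) = ∅

lemma TI.image {ι : Type} {S Δ : Set Plane} (h : TI ι S Δ) (F : Plane ≃ᵢ Plane) :
    TI ι (F '' S) Δ := by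
  obtain ⟨f, hS, hd⟩ := h
  have e : ∀ i, ((f i).trans F) '' Δ = F '' (f i '' Δ) := by
    intro i
    rw [Set.image_image]; rfl
  refine ⟨fun i => (f i).trans F, ?_, ?_⟩
  · rw [hS, Set.image_iUnion]
    simp only [e]
  · intro i j hij
    simp only [e]
    have hi : ∀ X : Set Plane, interior (F '' X) = F '' interior X :=
      fun X => (F.toHomeomorph.image_interior X).symm
    rw [hi, hi, ← Set.image_inter F.injective, hd i j hij, Set.image_empty]

lemma TI.union {ι κ : Type} {S T Δ : Set Plane} (h : TI ι S Δ) (h' : TI κ T Δ)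
    (hST : interior S ∩ interior T = ∅) : TI (ι ⊕ κ) (S ∪ T) Δ := by
  obtain ⟨f, hS, hd⟩ := h
  obtain ⟨g, hT, hd'⟩ := h'
  have key : ∀ i j, interior (f i '' Δ) ∩ interior (g j '' Δ) = ∅ := by
    intro i j
    apply Set.subset_eq_empty _ hST
    apply Set.inter_subset_inter <;> apply interior_mono
    · rw [hS]; exact Set.subset_iUnion (fun i => f i '' Δ) i
    · rw [hT]; exact Set.subset_iUnion (fun i => g i '' Δ) j
  refine ⟨Sum.elim f g, ?_, ?_⟩
  · rw [hS, hT, Set.iUnion_sum]; rfl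
  · rintro (i | i) (j | j) hij
    · exact hd i j (by simpa using hij)
    · exact key i j
    · rw [Set.inter_comm]; exact key j i
    · exact hd' i j (by simpa using hij)

/-- scaled canonical triangle -/
def Tr (a b n : ℝ) : Set Plane :=
  {p | ∃ s t : ℝ, 0 ≤ s ∧ 0 ≤ t ∧ s + t ≤ n ∧ p = qq (a * s) (b * t)}

lemma exists_tile (a b : ℝ) (n : ℕ) (i : Fin n × Fin n) : ∃ F : Plane ≃ᵢ Plane, ∀ x y,
    F (qq x y) = if (i.1 : ℕ) + i.2 < n then qq (x + a * i.1) (y + b * i.2)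
      else qq (a * (n - (i.1 : ℕ)) - x) (b * (n - (i.2 : ℕ)) - y) := by
  by_cases h : (i.1 : ℕ) + i.2 < n
  · obtain ⟨F, hF⟩ := exists_iso 1 0 0 1 (a * i.1) (b * i.2) 1 (by norm_num) (by norm_num)
      (by norm_num) (by norm_num) (by norm_num)
    refine ⟨F, fun x y => ?_⟩
    rw [if_pos h, hF]
    congr 1 <;> ring
  · obtain ⟨F, hF⟩ := exists_iso (-1) 0 0 (-1) (a * (n - (i.1 : ℕ))) (b * (n - (i.2 : ℕ))) 1
      (by norm_num) (by norm_num) (by norm_num) (by norm_num) (by norm_num)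
    refine ⟨F, fun x y => ?_⟩
    rw [if_neg h, hF]
    congr 1 <;> ring

lemma qq_inj {x y x' y' : ℝ} (h : qq x y = qq x' y') : x = x' ∧ y = y' :=
  ⟨by simpa using congrArg oX h, by simpa using congrArg oY h⟩

/-- Combinatorial description of a tile: cell `(i,j)`, and `e = 0` (up) or `1` (down). -/
def Cell (a b : ℝ) (i j e : ℤ) : Set Plane :=
  {p | ∃ s t : ℝ, i ≤ s ∧ s ≤ i + 1 ∧ j ≤ t ∧ t ≤ j + 1 ∧ i + j + e ≤ s + t ∧
    s + t ≤ i + j + e + 1 ∧ p = qq (a * s) (b * t)}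

lemma cell_sep {a b : ℝ} (ha : 0 < a) (hb : 0 < b) (i j e i' j' e' : ℤ)
    (hne : i < i' ∨ j < j' ∨ i = i' ∧ j = j' ∧ e < e') :
    interior (Cell a b i j e) ∩ interior (Cell a b i' j' e') = ∅ := by
  have mk : ∀ x y (i j e : ℤ), qq x y ∈ Cell a b i j e →
      (i : ℝ) ≤ a⁻¹ * x ∧ a⁻¹ * x ≤ i + 1 ∧ j ≤ b⁻¹ * y ∧ b⁻¹ * y ≤ j + 1 ∧
      i + j + e ≤ a⁻¹ * x + b⁻¹ * y ∧ a⁻¹ * x + b⁻¹ * y ≤ i + j + e + 1 := by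
    rintro x y i j e ⟨s, t, h1, h2, h3, h4, h5, h6, h7⟩
    obtain ⟨rfl, rfl⟩ := qq_inj h7
    rw [inv_mul_cancel_left₀ ha.ne', inv_mul_cancel_left₀ hb.ne']
    exact ⟨h1, h2, h3, h4, h5, h6⟩
  rcases hne with h | h | ⟨rfl, rfl, h⟩
  · have h' : (i : ℝ) + 1 ≤ i' := by exact_mod_cast h
    refine sep _ _ a⁻¹ 0 (i + 1) (by positivity) ?_ ?_ <;> intro x y hx <;>
      obtain ⟨h1, h2, h3, h4, h5, h6⟩ := mk _ _ _ _ _ hx <;> linarith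
  · have h' : (j : ℝ) + 1 ≤ j' := by exact_mod_cast h
    refine sep _ _ 0 b⁻¹ (j + 1) (by positivity) ?_ ?_ <;> intro x y hx <;>
      obtain ⟨h1, h2, h3, h4, h5, h6⟩ := mk _ _ _ _ _ hx <;> linarith
  · have h' : (e : ℝ) + 1 ≤ e' := by exact_mod_cast h
    refine sep _ _ a⁻¹ b⁻¹ (i + j + e + 1) (by positivity) ?_ ?_ <;> intro x y hx <;>
      obtain ⟨h1, h2, h3, h4, h5, h6⟩ := mk _ _ _ _ _ hx <;> linarith

lemma cell_sep' {a b : ℝ} (ha : 0 < a) (hb : 0 < b) (i j e i' j' e' : ℤ)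
    (hne : ¬ (i = i' ∧ j = j' ∧ e = e')) :
    interior (Cell a b i j e) ∩ interior (Cell a b i' j' e') = ∅ := by
  by_cases h : i < i' ∨ j < j' ∨ i = i' ∧ j = j' ∧ e < e'
  · exact cell_sep ha hb _ _ _ _ _ _ h
  · rw [Set.inter_comm]
    exact cell_sep ha hb _ _ _ _ _ _ (by omega)

lemma tile_up (a b : ℝ) (F : Plane ≃ᵢ Plane) (i j : ℕ)
    (hF : ∀ x y, F (qq x y) = qq (x + a * i) (y + b * j)) :
    F '' Tr a b 1 = Cell a b i j 0 := by
  ext p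
  constructor
  · rintro ⟨_, ⟨s, t, h1, h2, h3, rfl⟩, rfl⟩
    refine ⟨s + i, t + j, ?_, ?_, ?_, ?_, ?_, ?_, ?_⟩
    iterate 6 (push_cast; linarith)
    rw [hF]; congr 1 <;> ring
  · rintro ⟨s, t, h1, h2, h3, h4, h5, h6, rfl⟩
    push_cast at *
    refine ⟨_, ⟨s - i, t - j, by linarith, by linarith, by linarith, rfl⟩, ?_⟩
    rw [hF]; congr 1 <;> ring

lemma tile_down (a b : ℝ) (F : Plane ≃ᵢ Plane) (n i j : ℕ)
    (hF : ∀ x y, F (qq x y) = qq (a * (n - i) - x) (b * (n - j) - y)) :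
    F '' Tr a b 1 = Cell a b (n - 1 - i) (n - 1 - j) 1 := by
  ext p
  constructor
  · rintro ⟨_, ⟨s, t, h1, h2, h3, rfl⟩, rfl⟩
    refine ⟨n - i - s, n - j - t, ?_, ?_, ?_, ?_, ?_, ?_, ?_⟩
    iterate 6 (push_cast; linarith)
    rw [hF]; congr 1 <;> ring
  · rintro ⟨s, t, h1, h2, h3, h4, h5, h6, rfl⟩
    push_cast at *
    refine ⟨_, ⟨n - i - s, n - j - t, by linarith, by linarith, by linarith, rfl⟩, ?_⟩
    rw [hF]; congr 1 <;> ring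

lemma grid {a b : ℝ} (ha : 0 < a) (hb : 0 < b) (n : ℕ) (hn : 0 < n) :
    TI (Fin n × Fin n) (Tr a b n) (Tr a b 1) := by
  choose f hf using exists_tile a b n
  have up : ∀ i : Fin n × Fin n, (i.1 : ℕ) + i.2 < n →
      f i '' Tr a b 1 = Cell a b (i.1 : ℕ) (i.2 : ℕ) 0 := by
    intro i hi
    exact tile_up a b _ _ _ (fun x y => by rw [hf, if_pos hi])
  have dn : ∀ i : Fin n × Fin n, ¬ (i.1 : ℕ) + i.2 < n →
      f i '' Tr a b 1 = Cell a b (n - 1 - (i.1 : ℕ)) (n - 1 - (i.2 : ℕ)) 1 := by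
    intro i hi
    exact tile_down a b _ _ _ _ (fun x y => by rw [hf, if_neg hi])
  refine ⟨f, ?_, ?_⟩
  · apply Set.Subset.antisymm
    · rintro _ ⟨s, t, hs, ht, hst, rfl⟩
      rw [Set.mem_iUnion]
      -- it suffices to find a cell
      have mu : ∀ i j : ℕ, i + j < n → qq (a * s) (b * t) ∈ Cell a b i j 0 →
          ∃ k, qq (a * s) (b * t) ∈ f k '' Tr a b 1 := by
        intro i j hij hm
        refine ⟨(⟨i, by omega⟩, ⟨j, by omega⟩), ?_⟩
        rw [up _ (by simpa using hij)]
        exact hm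
      have md : ∀ i j : ℕ, i + j + 1 < n → qq (a * s) (b * t) ∈ Cell a b i j 1 →
          ∃ k, qq (a * s) (b * t) ∈ f k '' Tr a b 1 := by
        intro i j hij hm
        refine ⟨(⟨n - 1 - i, by omega⟩, ⟨n - 1 - j, by omega⟩), ?_⟩
        rw [dn _ (by simp only; omega)]
        convert hm using 1
        congr 1 <;> simp only <;> omega
      have s1 := Nat.floor_le hs
      have s2 := (Nat.lt_floor_add_one s).le
      have t1 := Nat.floor_le ht
      have t2 := (Nat.lt_floor_add_one t).le
      set i := ⌊s⌋₊
      set j := ⌊t⌋₊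
      have hij : i + j ≤ n := by
        have : (i : ℝ) + j ≤ n := by linarith
        exact_mod_cast this
      by_cases hle : s + t ≤ i + j + 1
      · rcases lt_or_eq_of_le hij with hlt | heq
        · exact mu i j hlt ⟨s, t, by push_cast; linarith, by push_cast; linarith,
            by push_cast; linarith, by push_cast; linarith, by push_cast; linarith,
            by push_cast; linarith, rfl⟩
        · have heq' : (i : ℝ) + j = n := by exact_mod_cast heq
          rcases Nat.eq_zero_or_pos i with h0 | h0
          · obtain ⟨j', hj'⟩ : ∃ j', j = j' + 1 := ⟨j - 1, by omega⟩
            have : (j : ℝ) = j' + 1 := by exact_mod_cast hj'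
            exact mu i j' (by omega) ⟨s, t, by push_cast; linarith, by push_cast; linarith,
              by push_cast; linarith, by push_cast; linarith, by push_cast; linarith,
              by push_cast; linarith, rfl⟩
          · obtain ⟨i', hi'⟩ : ∃ i', i = i' + 1 := ⟨i - 1, by omega⟩
            have : (i : ℝ) = i' + 1 := by exact_mod_cast hi'
            exact mu i' j (by omega) ⟨s, t, by push_cast; linarith, by push_cast; linarith,
              by push_cast; linarith, by push_cast; linarith, by push_cast; linarith,
              by push_cast; linarith, rfl⟩
      · push Not at hle
        have : i + j + 1 < n := by
          have : (i : ℝ) + j + 1 < n := by linarith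
          exact_mod_cast this
        exact md i j this ⟨s, t, by push_cast; linarith, by push_cast; linarith,
            by push_cast; linarith, by push_cast; linarith, by push_cast; linarith,
            by push_cast; linarith, rfl⟩
    · apply Set.iUnion_subset
      intro i
      have b1 : ((i.1 : ℕ) : ℝ) + 1 ≤ n := by exact_mod_cast i.1.2
      have b2 : ((i.2 : ℕ) : ℝ) + 1 ≤ n := by exact_mod_cast i.2.2
      by_cases hi : (i.1 : ℕ) + i.2 < n
      · rw [up i hi]
        rintro _ ⟨s, t, h1, h2, h3, h4, h5, h6, rfl⟩
        have hi' : ((i.1 : ℕ) : ℝ) + (i.2 : ℕ) + 1 ≤ n := by exact_mod_cast hi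
        push_cast at *
        have p1 : (0 : ℝ) ≤ (i.1 : ℕ) := Nat.cast_nonneg _
        have p2 : (0 : ℝ) ≤ (i.2 : ℕ) := Nat.cast_nonneg _
        exact ⟨s, t, by linarith, by linarith, by linarith, rfl⟩
      · rw [dn i hi]
        rintro _ ⟨s, t, h1, h2, h3, h4, h5, h6, rfl⟩
        have hi' : (n : ℝ) ≤ ((i.1 : ℕ) : ℝ) + (i.2 : ℕ) := by
          exact_mod_cast not_lt.mp hi
        push_cast at *
        exact ⟨s, t, by linarith, by linarith, by linarith, rfl⟩
  · intro i j hij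
    have hij' : ¬ ((i.1 : ℕ) = j.1 ∧ (i.2 : ℕ) = j.2) := by
      rintro ⟨h1, h2⟩
      exact hij (Prod.ext (Fin.ext h1) (Fin.ext h2))
    by_cases hi : (i.1 : ℕ) + i.2 < n <;> by_cases hj : (j.1 : ℕ) + j.2 < n
    · rw [up i hi, up j hj]; exact cell_sep' ha hb _ _ _ _ _ _ (by omega)
    · rw [up i hi, dn j hj]; exact cell_sep' ha hb _ _ _ _ _ _ (by omega)
    · rw [dn i hi, up j hj]; exact cell_sep' ha hb _ _ _ _ _ _ (by omega)
    · rw [dn i hi, dn j hj]; exact cell_sep' ha hb _ _ _ _ _ _ (by omega)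

lemma Tr_isTriangle {a b c : ℝ} (ha : 0 < a) (hb : 0 < b) (hc : 0 < c)
    (h : c ^ 2 + a * b = a ^ 2 + b ^ 2) : IsTriangle a b c (Tr a b 1) := by
  refine ⟨qq 0 b, qq a 0, qq 0 0, ?_, ?_, ?_, ?_⟩
  · rw [qq_dist, show (a - 0) ^ 2 + (a - 0) * (0 - 0) + (0 - 0 : ℝ) ^ 2 = a ^ 2 by ring]
    exact Real.sqrt_sq ha.le
  · rw [qq_dist, show (0 - 0 : ℝ) ^ 2 + (0 - 0) * (b - 0) + (b - 0 : ℝ) ^ 2 = b ^ 2 by ring]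
    exact Real.sqrt_sq hb.le
  · rw [qq_dist, show (0 - a : ℝ) ^ 2 + (0 - a) * (b - 0) + (b - 0 : ℝ) ^ 2 = c ^ 2 by
      linear_combination -h]
    exact Real.sqrt_sq hc.le
  · rw [convexHull_insert (by simp), convexHull_pair]
    ext p
    simp only [convexJoin, Set.mem_iUnion, segment, Set.mem_singleton_iff, exists_prop]
    constructor
    · rintro ⟨s, t, hs, ht, hst, rfl⟩
      by_cases h1 : t = 1
      · have : s = 0 := by linarith
        subst h1 this
        refine ⟨_, rfl, _, ⟨1, 0, by norm_num, by norm_num, by norm_num, rfl⟩,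
          1, 0, by norm_num, by norm_num, by norm_num, ?_⟩
        simp only [qq_comb]; congr 1 <;> ring
      · have h2 : 0 < 1 - t := by
          have : t < 1 := lt_of_le_of_ne (by linarith) h1
          linarith
        refine ⟨_, rfl, _, ⟨s / (1 - t), 1 - s / (1 - t), by positivity, ?_, by ring, rfl⟩,
          t, 1 - t, ht, h2.le, by ring, ?_⟩
        · rw [sub_nonneg, div_le_one h2]; linarith
        · simp only [qq_comb]; congr 1 <;> field_simp <;> ring
    · rintro ⟨_, rfl, _, ⟨u, v, hu, hv, huv, rfl⟩, r, w, hr, hw, hrw, rfl⟩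
      refine ⟨w * u, r, by positivity, hr, ?_, ?_⟩
      · nlinarith
      · simp only [qq_comb]; congr 1 <;> ring

def HH (a b c : ℝ) : Set Plane :=
  {p | ∃ x y : ℝ, 0 ≤ x ∧ 0 ≤ y ∧ y ≤ a * b ∧ x + y ≤ c ^ 2 + a * b ∧ p = qq x y}

lemma trap_eq {a b c : ℝ} (ha : 0 < a) (hb : 0 < b) (hc : 0 < c) :
    IdealTrapezoid (c ^ 2) (a * b) = HH a b c := by
  have hab := mul_pos ha hb
  have hcc : 0 < c ^ 2 := by positivity
  have e : IdealTrapezoid (c ^ 2) (a * b) = convexHull ℝ {qq 0 0, qq (c ^ 2 + a * b) 0,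
      qq (c ^ 2) (a * b), qq 0 (a * b)} := by
    simp [IdealTrapezoid, qq]
  rw [e]
  apply Set.Subset.antisymm
  · apply convexHull_min
    · rintro p (rfl | rfl | rfl | rfl)
      · exact ⟨0, 0, by linarith, by linarith, by linarith, by linarith, rfl⟩
      · exact ⟨_, 0, by linarith, by linarith, by linarith, by linarith, rfl⟩
      · exact ⟨_, _, by linarith, by linarith, by linarith, by linarith, rfl⟩
      · exact ⟨0, _, by linarith, by linarith, by linarith, by linarith, rfl⟩
    · rintro _ ⟨x, y, h1, h2, h3, h4, rfl⟩ _ ⟨x', y', h1', h2', h3', h4', rfl⟩ r t hr ht hrt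
      rw [qq_comb]
      refine ⟨_, _, by positivity, by positivity, ?_, ?_, rfl⟩
      · obtain rfl : t = 1 - r := by linarith
        nlinarith
      · obtain rfl : t = 1 - r := by linarith
        nlinarith
  · rintro _ ⟨x, y, h1, h2, h3, h4, rfl⟩
    have hcv := convex_convexHull ℝ ({qq 0 0, qq (c ^ 2 + a * b) 0,
      qq (c ^ 2) (a * b), qq 0 (a * b)} : Set Plane)
    have hsub := subset_convexHull ℝ ({qq 0 0, qq (c ^ 2 + a * b) 0,
      qq (c ^ 2) (a * b), qq 0 (a * b)} : Set Plane)
    have hτ0 : 0 ≤ y / (a * b) := by positivity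
    have hτ1 : 0 ≤ 1 - y / (a * b) := by rw [sub_nonneg, div_le_one hab]; exact h3
    have hw : 0 < c ^ 2 + a * b - y := by linarith
    have hl0 : 0 ≤ x / (c ^ 2 + a * b - y) := by positivity
    have hl1 : 0 ≤ 1 - x / (c ^ 2 + a * b - y) := by
      rw [sub_nonneg, div_le_one hw]; linarith
    have L := hcv (hsub (show qq 0 0 ∈ _ by simp)) (hsub (show qq 0 (a * b) ∈ _ by simp))
      hτ1 hτ0 (by ring)
    have R := hcv (hsub (show qq (c ^ 2 + a * b) 0 ∈ _ by simp))
      (hsub (show qq (c ^ 2) (a * b) ∈ _ by simp)) hτ1 hτ0 (by ring)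
    have M := hcv L R hl1 hl0 (by ring)
    simp only [qq_comb] at M
    convert M using 1
    congr 1
    · field_simp; ring
    · field_simp; ring

lemma main {a b c : ℕ} (ha : 0 < a) (hb : 0 < b) (hc : 0 < c)
    (h : (c : ℝ) ^ 2 + a * b = a ^ 2 + b ^ 2) :
    TI (((Fin a × Fin a) ⊕ (Fin c × Fin c)) ⊕ (Fin b × Fin b)) (HH a b c) (Tr a b 1) := by
  have ha' : (0 : ℝ) < a := by exact_mod_cast ha
  have hb' : (0 : ℝ) < b := by exact_mod_cast hb
  have hc' : (0 : ℝ) < c := by exact_mod_cast hc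
  have g1 := grid ha' hb' a ha
  have g2 := grid ha' hb' b hb
  have g3 := grid ha' hb' c hc
  generalize (a : ℝ) = A at *
  generalize (b : ℝ) = B at *
  generalize (c : ℝ) = C at *
  have hAB := mul_pos ha' hb'
  have hCC : 0 < C ^ 2 := by positivity
  obtain ⟨F, hF⟩ := exists_iso (-1) (-1) 1 0 (A ^ 2 + B ^ 2) 0 1 (by norm_num) (by norm_num)
    (by norm_num) (by norm_num) (by norm_num)
  obtain ⟨G, hG⟩ := exists_iso (-A / C) ((B - A) / C) (B / C) (A / C) (A ^ 2) 0 (-1)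
    (by field_simp; linear_combination h) (by norm_num)
    (by field_simp; linear_combination -h)
    (by field_simp; linear_combination -h)
    (by field_simp; linear_combination -h)
  -- coordinates of the three pieces
  have q1 : 0 < A ^ 2 - A * B + B ^ 2 := by nlinarith
  have e1 : ∀ x y, qq x y ∈ Tr A B A → 0 ≤ x ∧ 0 ≤ y ∧ y ≤ A * B ∧ x + y ≤ A ^ 2 + B ^ 2 ∧
      B * x + A * y ≤ A * A * B ∧ A * B * B ≤ A * (A ^ 2 + B ^ 2 - x - y) + B * y := by
    rintro x y ⟨s, t, hs, ht, hst, he⟩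
    obtain ⟨rfl, rfl⟩ := qq_inj he
    have k1 : 0 ≤ A - s - t := by linarith
    refine ⟨by positivity, by positivity, by nlinarith, ?_, ?_, ?_⟩
    · have : A * t ≤ A * A := by nlinarith
      have : B * t ≤ B * A := by nlinarith
      nlinarith [mul_nonneg ha'.le k1, sq_nonneg (A - B), mul_nonneg ha'.le ht]
    · nlinarith [mul_nonneg hAB.le k1]
    · nlinarith [mul_nonneg (mul_nonneg ha'.le ha'.le) k1, mul_nonneg ht q1.le]
  have e2 : ∀ x y, qq x y ∈ F '' Tr A B B → 0 ≤ x ∧ 0 ≤ y ∧ y ≤ A * B ∧ x + y ≤ A ^ 2 + B ^ 2 ∧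
      A * (A ^ 2 + B ^ 2 - x - y) + B * y ≤ A * B * B := by
    rintro x y ⟨_, ⟨s, t, hs, ht, hst, rfl⟩, he⟩
    rw [hF] at he
    obtain ⟨rfl, rfl⟩ := qq_inj he
    have k1 : 0 ≤ B - s - t := by linarith
    refine ⟨?_, by ring_nf; positivity, by nlinarith, by nlinarith, ?_⟩
    · have : A * s ≤ A * B := by nlinarith
      nlinarith [mul_nonneg hb'.le k1, sq_nonneg (A - B), mul_nonneg hb'.le hs]
    · nlinarith [mul_nonneg hAB.le k1]
  have e3 : ∀ x y, qq x y ∈ G '' Tr A B C → 0 ≤ x ∧ 0 ≤ y ∧ y ≤ A * B ∧ x + y ≤ A ^ 2 + B ^ 2 ∧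
      A * A * B ≤ B * x + A * y ∧ A * B * B ≤ A * (A ^ 2 + B ^ 2 - x - y) + B * y := by
    rintro x y ⟨_, ⟨s, t, hs, ht, hst, rfl⟩, he⟩
    rw [hG] at he
    obtain ⟨hx, hy⟩ := qq_inj he
    obtain ⟨σ, rfl⟩ : ∃ σ, s = C * σ := ⟨s / C, by field_simp⟩
    obtain ⟨τ, rfl⟩ : ∃ τ, t = C * τ := ⟨t / C, by field_simp⟩
    have hs' : 0 ≤ σ := nonneg_of_mul_nonneg_right hs hc'
    have ht' : 0 ≤ τ := nonneg_of_mul_nonneg_right ht hc'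
    have k1 : 0 ≤ 1 - σ - τ := by
      have : 0 ≤ C * (1 - σ - τ) := by linarith
      exact nonneg_of_mul_nonneg_right this hc'
    have hx' : x = A ^ 2 - A ^ 2 * σ + (B - A) * B * τ := by
      rw [← hx]; field_simp; ring
    have hy' : y = A * B * (σ + τ) := by
      rw [← hy]; field_simp; ring
    clear hx hy he hs ht hst
    subst hx' hy'
    refine ⟨?_, by positivity, ?_, ?_, ?_, ?_⟩
    · nlinarith [mul_nonneg (sq_nonneg A) k1, mul_nonneg ht' q1.le]
    · nlinarith [mul_nonneg hAB.le k1]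
    · nlinarith [mul_nonneg (sq_nonneg B) k1, mul_nonneg hs' q1.le]
    · nlinarith [mul_nonneg hb'.le (mul_nonneg ht' q1.le)]
    · nlinarith [mul_nonneg ha'.le (mul_nonneg hs' q1.le)]
  have eq : HH A B C = (Tr A B A ∪ G '' Tr A B C) ∪ F '' Tr A B B := by
    apply Set.Subset.antisymm
    · rintro _ ⟨x, y, h1, h2, h3, h4, rfl⟩
      by_cases c1 : B * x + A * y ≤ A * A * B
      · refine Or.inl (Or.inl ⟨x / A, y / B, by positivity, by positivity, ?_, ?_⟩)
        · rw [div_add_div _ _ ha'.ne' hb'.ne', div_le_iff₀ hAB]; linarith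
        · congr 1 <;> field_simp
      by_cases c2 : A * (A ^ 2 + B ^ 2 - x - y) + B * y ≤ A * B * B
      · refine Or.inr ⟨_, ⟨y / A, (A ^ 2 + B ^ 2 - x - y) / B, by positivity,
          div_nonneg (by linarith) hb'.le, ?_, rfl⟩, ?_⟩
        · rw [div_add_div _ _ ha'.ne' hb'.ne', div_le_iff₀ hAB]; linarith
        · rw [hF]; congr 1
          · field_simp; ring
          · field_simp; ring
      · push Not at c1 c2
        have hC2 : C ^ 2 = A ^ 2 + B ^ 2 - A * B := by linarith
        refine Or.inl (Or.inr ⟨_, ⟨(A * (A ^ 2 + B ^ 2 - x - y) + B * y - A * B * B) / (A * C),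
          (B * x + A * y - A * A * B) / (B * C), div_nonneg (by linarith) (by positivity),
          div_nonneg (by linarith) (by positivity), ?_, rfl⟩, ?_⟩)
        · have : (A * (A ^ 2 + B ^ 2 - x - y) + B * y - A * B * B) / (A * C) +
              (B * x + A * y - A * A * B) / (B * C) = C * (y / (A * B)) := by
            field_simp
            rw [hC2]; ring
          rw [this]
          have : y / (A * B) ≤ 1 := by rw [div_le_one hAB]; exact h3
          nlinarith
        · rw [hG]; congr 1
          · field_simp; rw [hC2]; ring
          · field_simp; rw [hC2]; ring
    · rintro p ((hp | hp) | hp) <;> rw [← qq_o p] at hp ⊢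
      · obtain ⟨k1, k2, k3, k4, -⟩ := e1 _ _ hp
        exact ⟨_, _, k1, k2, k3, by linarith, rfl⟩
      · obtain ⟨k1, k2, k3, k4, -⟩ := e3 _ _ hp
        exact ⟨_, _, k1, k2, k3, by linarith, rfl⟩
      · obtain ⟨k1, k2, k3, k4, -⟩ := e2 _ _ hp
        exact ⟨_, _, k1, k2, k3, by linarith, rfl⟩
  rw [eq]
  refine (g1.union (g3.image G) ?_).union (g2.image F) ?_
  · refine sep _ _ B A (A * A * B) (by positivity) ?_ ?_
    · intro x y hp
      obtain ⟨k1, k2, k3, k4, k5, k6⟩ := e1 _ _ hp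
      exact k5
    · intro x y hp
      obtain ⟨k1, k2, k3, k4, k5, k6⟩ := e3 _ _ hp
      exact k5
  · refine sep _ _ A (A - B) (A * (A ^ 2 + B ^ 2) - A * B * B) (by positivity) ?_ ?_
    · rintro x y (hp | hp)
      · obtain ⟨k1, k2, k3, k4, k5, k6⟩ := e1 _ _ hp
        linarith
      · obtain ⟨k1, k2, k3, k4, k5, k6⟩ := e3 _ _ hp
        linarith
    · intro x y hp
      obtain ⟨k1, k2, k3, k4, k5⟩ := e2 _ _ hp
      linarith

theorem stmt6 (a b c : ℕ) (ha : 0 < a) (hb : 0 < b) (hc : 0 < c)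
    (h : c ^ 2 + a * b = a ^ 2 + b ^ 2) :
    TilesInto (IdealTrapezoid ((c : ℝ) ^ 2) ((a : ℝ) * b))
      (a ^ 2 + b ^ 2 + c ^ 2) a b c := by
  have ha' : (0 : ℝ) < a := by exact_mod_cast ha
  have hb' : (0 : ℝ) < b := by exact_mod_cast hb
  have hc' : (0 : ℝ) < c := by exact_mod_cast hc
  have h' : (c : ℝ) ^ 2 + a * b = a ^ 2 + b ^ 2 := by exact_mod_cast h
  obtain ⟨f, hS, hd⟩ := main ha hb hc h'
  have e : Fin (a ^ 2 + b ^ 2 + c ^ 2) ≃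
      (((Fin a × Fin a) ⊕ (Fin c × Fin c)) ⊕ (Fin b × Fin b)) :=
    Fintype.equivOfCardEq (by simp; ring)
  refine ⟨fun i => f (e i), Tr a b 1, Tr_isTriangle ha' hb' hc' h', ?_, ?_⟩
  · rw [trap_eq ha' hb' hc', hS]
    exact (e.surjective.iUnion_comp (fun i => f i '' Tr a b 1)).symm
  · intro i j hij
    exact hd _ _ (fun h => hij (e.injective h))
end
end
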